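/- arXiv:1506.07076 — 2 statements merged into one kernel-verified Lean document; each statement's English description precedes it below -/
import Mathlib

section
/- Let G = (V, E_G) be a bipartite graph and let H = (V, E_H) be an unweighted edge-degree-constrained subgraph EDCS(G, β, β(1−λ)) for some 0 < λ < 1. Then there exist disjoint sets of vertices S and T such that: (1) |T| = μ(H); (2) |S| = 2(μ(G) − μ(H)); (3) every edge of H incident to a vertex of S has its other endpoint in T; and (4) the sum of the degrees d_H(s) over s ∈ S is at least |S|·β(1−λ)/2 (i.e., the average degree of vertices of S in H is at least β(1−λ)/2). -/
/-- The maximum size of a matching (a finite set of pairwise vertex-disjoint edges)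
contained in a set of edges `E`. -/
noncomputable def nuSet {V : Type*} (E : Set (Sym2 V)) : ℕ :=
  sSup {n | ∃ M : Finset (Sym2 V), ↑M ⊆ E ∧
    (∀ e ∈ M, ∀ f ∈ M, e ≠ f → ∀ v : V, v ∈ e → v ∉ f) ∧ M.card = n}

/-- The degree of `v` in the simple graph `H`. -/
noncomputable def sdeg {V : Type*} (H : SimpleGraph V) (v : V) : ℕ :=
  (H.neighborSet v).ncard

/-- A finite set of pairwise vertex-disjoint edges. -/
def IsEdgeMatching {V : Type*} (M : Finset (Sym2 V)) : Prop :=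
  ∀ e ∈ M, ∀ f ∈ M, e ≠ f → ∀ v : V, v ∈ e → v ∉ f

lemma bddAbove_matching_card {V : Type*} [Fintype V] (E : Set (Sym2 V)) :
    BddAbove {n | ∃ M : Finset (Sym2 V), ↑M ⊆ E ∧ IsEdgeMatching M ∧ M.card = n} := by
  classical
  refine ⟨Fintype.card (Sym2 V), ?_⟩
  rintro n ⟨M, -, -, rfl⟩
  exact Finset.card_le_univ M

lemma IsEdgeMatching.card_le_nuSet {V : Type*} [Fintype V] {E : Set (Sym2 V)}
    {M : Finset (Sym2 V)} (hM : IsEdgeMatching M) (hME : ↑M ⊆ E) : M.card ≤ nuSet E :=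
  le_csSup (bddAbove_matching_card E) ⟨M, hME, hM, rfl⟩

lemma exists_matching_card_eq_nuSet {V : Type*} [Fintype V] (E : Set (Sym2 V)) :
    ∃ M : Finset (Sym2 V), ↑M ⊆ E ∧ IsEdgeMatching M ∧ M.card = nuSet E := by
  have hne : {n | ∃ M : Finset (Sym2 V), ↑M ⊆ E ∧ IsEdgeMatching M ∧ M.card = n}.Nonempty :=
    ⟨0, ∅, by simp, by simp [IsEdgeMatching], by simp⟩
  exact Nat.sSup_mem hne (bddAbove_matching_card E)

/-- Each vertex of `T` meets at most one edge of a matching. -/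
lemma IsEdgeMatching.card_filter_meets_le {V : Type*} [DecidableEq V] {M : Finset (Sym2 V)}
    (hM : IsEdgeMatching M) (T : Finset V) :
    (M.filter fun e => ∃ t ∈ T, t ∈ e).card ≤ T.card := by
  have hmeet : ∀ e ∈ M.filter (fun e => ∃ t ∈ T, t ∈ e), ∃ t ∈ T, t ∈ e :=
    fun e he => (Finset.mem_filter.1 he).2
  choose g hgT hge using hmeet
  refine Finset.card_le_card_of_injOn
    (fun e => if he : e ∈ M.filter (fun e => ∃ t ∈ T, t ∈ e) then g e he else e.out.1) ?_ ?_
  · intro e he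
    have he' := Finset.mem_coe.1 he
    simp only [dif_pos he']
    exact hgT e he'
  · intro e he f hf hef
    have he' := Finset.mem_coe.1 he
    have hf' := Finset.mem_coe.1 hf
    simp only [dif_pos he', dif_pos hf'] at hef
    by_contra hne
    exact hM e (Finset.mem_filter.1 he').1 f (Finset.mem_filter.1 hf').1 hne _ (hge e he')
      (hef ▸ hge f hf')

/-- In a minimum vertex cover of a properly colored graph, each color class of the cover can be
matched into the complement of the cover. -/
lemma exists_injOn_adj_of_minimum_cover {V α : Type*} [Fintype V] [DecidableEq V]
    {H : SimpleGraph V} (c : H.Coloring α) {T : Finset V}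
    (hT : ∀ u v, H.Adj u v → u ∈ T ∨ v ∈ T)
    (hmin : ∀ T' : Finset V, (∀ u v, H.Adj u v → u ∈ T' ∨ v ∈ T') → T.card ≤ T'.card) (i : α) :
    ∃ f : V → V, (∀ t ∈ T, c t = i → H.Adj t (f t) ∧ f t ∉ T) ∧
      ∀ s ∈ T, ∀ t ∈ T, c s = i → c t = i → f s = f t → s = t := by
  classical
  let nbr : {t // t ∈ T ∧ c t = i} → Finset V :=
    fun t => Finset.univ.filter fun v => H.Adj t v ∧ v ∉ T
  have hall : ∀ X : Finset {t // t ∈ T ∧ c t = i}, X.card ≤ (X.biUnion nbr).card := by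
    intro X
    let X' : Finset V := X.map (Function.Embedding.subtype _)
    have hX'T : X' ⊆ T := by
      intro x hx
      obtain ⟨y, -, rfl⟩ := Finset.mem_map.1 hx
      exact y.2.1
    have hX'c : ∀ x ∈ X', c x = i := by
      intro x hx
      obtain ⟨y, -, rfl⟩ := Finset.mem_map.1 hx
      exact y.2.2
    have half : ∀ u v, H.Adj u v → u ∈ T →
        u ∈ (T \ X') ∪ X.biUnion nbr ∨ v ∈ (T \ X') ∪ X.biUnion nbr := by
      intro u v huv hu
      by_cases huX : u ∈ X'
      · right
        by_cases hv : v ∈ T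
        · refine Finset.mem_union_left _ (Finset.mem_sdiff.2 ⟨hv, fun hvX => ?_⟩)
          exact c.valid huv ((hX'c u huX).trans (hX'c v hvX).symm)
        · refine Finset.mem_union_right _ ?_
          obtain ⟨y, hy, rfl⟩ := Finset.mem_map.1 huX
          exact Finset.mem_biUnion.2 ⟨y, hy, Finset.mem_filter.2 ⟨Finset.mem_univ _, huv, hv⟩⟩
      · exact Or.inl (Finset.mem_union_left _ (Finset.mem_sdiff.2 ⟨hu, huX⟩))
    have hle := hmin ((T \ X') ∪ X.biUnion nbr) fun u v huv =>
      (hT u v huv).elim (half u v huv) fun hv => (half v u huv.symm hv).symm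
    have hunion := Finset.card_union_le (T \ X') (X.biUnion nbr)
    have hsdiff := Finset.card_sdiff_add_card_eq_card hX'T
    have hcard : X'.card = X.card := Finset.card_map _
    omega
  obtain ⟨f, hf, hfn⟩ := (Finset.all_card_le_biUnion_card_iff_exists_injective nbr).1 hall
  refine ⟨fun v => if hv : v ∈ T ∧ c v = i then f ⟨v, hv⟩ else v, ?_, ?_⟩
  · intro t ht hti
    have h := hfn ⟨t, ht, hti⟩
    simpa [nbr, ht, hti] using h
  · intro s hs t ht hsi hti hst
    simp only [hs, hsi, ht, hti, and_self, dite_true] at hst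
    exact congrArg Subtype.val (hf hst)

/-- **Kőnig's theorem**: a bipartite graph has a vertex cover whose size is the
maximum size of a matching. -/
theorem exists_cover_card_eq_nuSet {V : Type*} [Fintype V] [DecidableEq V]
    {H : SimpleGraph V} (hbip : H.Colorable 2) :
    ∃ T : Finset V, (∀ u v, H.Adj u v → u ∈ T ∨ v ∈ T) ∧ T.card = nuSet H.edgeSet := by
  classical
  obtain ⟨c⟩ := hbip
  obtain ⟨T, hTmem, hTmin⟩ := Finset.exists_min_image
    (Finset.univ.filter fun T : Finset V => ∀ u v, H.Adj u v → u ∈ T ∨ v ∈ T) Finset.card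
    ⟨Finset.univ, by simp⟩
  have hT := (Finset.mem_filter.1 hTmem).2
  have hmin : ∀ T' : Finset V, (∀ u v, H.Adj u v → u ∈ T' ∨ v ∈ T') → T.card ≤ T'.card :=
    fun T' hT' => hTmin T' (Finset.mem_filter.2 ⟨Finset.mem_univ _, hT'⟩)
  refine ⟨T, hT, le_antisymm ?_ ?_⟩
  · choose F hF hFinj using exists_injOn_adj_of_minimum_cover c hT hmin
    have hadj : ∀ t ∈ T, H.Adj t (F (c t) t) := fun t ht => (hF _ t ht rfl).1
    have hout : ∀ t ∈ T, F (c t) t ∉ T := fun t ht => (hF _ t ht rfl).2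
    have hinj : ∀ s ∈ T, ∀ t ∈ T, F (c s) s = F (c t) t → s = t := by
      intro s hs t ht hst
      have hs' := c.valid (hadj s hs)
      have ht' := c.valid (hadj t ht)
      rw [← hst] at ht'
      have hc : c s = c t := by omega
      refine hFinj (c t) s hs t ht hc rfl ?_
      rwa [hc] at hst
    have hedge : Set.InjOn (fun t => s(t, F (c t) t)) (T : Set V) := by
      intro s hs t ht hst
      rcases Sym2.eq_iff.1 hst with h | h
      · exact h.1
      · exact absurd (h.1 ▸ hs) (hout t ht)
    rw [← Finset.card_image_of_injOn hedge]
    refine IsEdgeMatching.card_le_nuSet ?_ ?_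
    · intro e he f hf hef v hve hvf
      obtain ⟨s, hs, rfl⟩ := Finset.mem_image.1 he
      obtain ⟨t, ht, rfl⟩ := Finset.mem_image.1 hf
      have hne : s ≠ t := fun h => hef (h ▸ rfl)
      rcases Sym2.mem_iff.1 hve with rfl | rfl
      · rcases Sym2.mem_iff.1 hvf with h | h
        · exact hne h
        · exact hout t ht (h ▸ hs)
      · rcases Sym2.mem_iff.1 hvf with h | h
        · exact hout s hs (h ▸ ht)
        · exact hne (hinj s hs t ht h)
    · intro e he
      obtain ⟨t, ht, rfl⟩ := Finset.mem_image.1 (Finset.mem_coe.1 he)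
      exact hadj t ht
  · obtain ⟨M, hME, hM, hcard⟩ := exists_matching_card_eq_nuSet H.edgeSet
    rw [← hcard, ← Finset.filter_true_of_mem (s := M) (p := fun e => ∃ t ∈ T, t ∈ e)]
    · exact hM.card_filter_meets_le T
    · intro e he
      induction e with
      | _ u v =>
        rcases hT u v (hME he) with h | h
        · exact ⟨u, h, Sym2.mem_mk_left u v⟩
        · exact ⟨v, h, Sym2.mem_mk_right u v⟩

/-- If `H` is an unweighted EDCS(G, β, β(1−λ)) of a bipartite graph `G`
with `0 < λ < 1`, then there are disjoint vertex sets `S`, `T` with `|T| = μ(H)`,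
`|S| = 2(μ(G) − μ(H))`, every edge of `H` incident to `S` going to `T`, and the vertices of
`S` having average degree in `H` at least `β(1−λ)/2`. -/
theorem stmt2 {V : Type*} [Fintype V] [DecidableEq V] (G H : SimpleGraph V)
    (hbip : G.Colorable 2) (hHG : H ≤ G)
    (β lam : ℝ) (hlam0 : 0 < lam) (hlam1 : lam < 1)
    (hP1 : ∀ u v : V, H.Adj u v → (sdeg H u + sdeg H v : ℝ) ≤ β)
    (hP2 : ∀ u v : V, G.Adj u v → ¬ H.Adj u v →
      (sdeg H u + sdeg H v : ℝ) ≥ β * (1 - lam)) :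
    ∃ S T : Finset V, Disjoint S T ∧
      T.card = nuSet H.edgeSet ∧
      (S.card : ℤ) = 2 * ((nuSet G.edgeSet : ℤ) - (nuSet H.edgeSet : ℤ)) ∧
      (∀ u v : V, H.Adj u v → u ∈ S → v ∈ T) ∧
      (S.card : ℝ) * (β * (1 - lam) / 2) ≤ ∑ s ∈ S, (sdeg H s : ℝ) := by
  obtain ⟨T, hT, hTcard⟩ := exists_cover_card_eq_nuSet (hbip.mono_left hHG)
  obtain ⟨M, hMG, hM, hMcard⟩ := exists_matching_card_eq_nuSet G.edgeSet
  have hmono : nuSet H.edgeSet ≤ nuSet G.edgeSet := by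
    obtain ⟨N, hNH, hN, hNcard⟩ := exists_matching_card_eq_nuSet H.edgeSet
    exact hNcard ▸ hN.card_le_nuSet (hNH.trans (SimpleGraph.edgeSet_mono hHG))
  have hsplit := Finset.card_filter_add_card_filter_not (s := M) fun e => ∃ t ∈ T, t ∈ e
  have hmeets := hM.card_filter_meets_le T
  obtain ⟨N, hNM, hNcard⟩ := Finset.exists_subset_card_eq
    (s := M.filter fun e => ¬ ∃ t ∈ T, t ∈ e) (n := nuSet G.edgeSet - nuSet H.edgeSet)
    (by omega)
  have hNmem : ∀ e ∈ N, e ∈ M := fun e he => (Finset.mem_filter.1 (hNM he)).1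
  have hNT : ∀ e ∈ N, ∀ v ∈ e, v ∉ T := fun e he v hv hvT =>
    (Finset.mem_filter.1 (hNM he)).2 ⟨v, hvT, hv⟩
  have hdisj : (N : Set (Sym2 V)).PairwiseDisjoint Sym2.toFinset := by
    intro e he f hf hef
    refine Finset.disjoint_left.2 fun v hve hvf => ?_
    exact hM e (hNmem e he) f (hNmem f hf) hef v (Sym2.mem_toFinset.1 hve)
      (Sym2.mem_toFinset.1 hvf)
  have hScard : (N.biUnion Sym2.toFinset).card = 2 * N.card := by
    rw [Finset.card_biUnion hdisj, Finset.sum_const_nat (m := 2), mul_comm]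
    intro e he
    exact Sym2.card_toFinset_of_not_isDiag e (G.not_isDiag_of_mem_edgeSet (hMG (hNmem e he)))
  have hST : ∀ v ∈ N.biUnion Sym2.toFinset, v ∉ T := by
    intro v hv
    obtain ⟨e, he, hve⟩ := Finset.mem_biUnion.1 hv
    exact hNT e he v (Sym2.mem_toFinset.1 hve)
  refine ⟨N.biUnion Sym2.toFinset, T, Finset.disjoint_left.2 fun v => hST v, hTcard, ?_, ?_, ?_⟩
  · rw [hScard, hNcard]
    omega
  · exact fun u v huv hu => (hT u v huv).resolve_left (hST u hu)
  · rw [Finset.sum_biUnion hdisj, hScard]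
    have hedge : ∀ e ∈ N, β * (1 - lam) ≤ ∑ s ∈ e.toFinset, (sdeg H s : ℝ) := by
      intro e he
      induction e with
      | _ u v =>
        have hadj : G.Adj u v := hMG (hNmem _ he)
        rw [Sym2.toFinset_mk_eq, Finset.sum_pair hadj.ne]
        refine hP2 u v hadj fun hH => ?_
        exact (hT u v hH).elim (hNT _ he u (Sym2.mem_mk_left u v))
          (hNT _ he v (Sym2.mem_mk_right u v))
    have hsum := Finset.card_nsmul_le_sum N _ _ hedge
    rw [nsmul_eq_mul] at hsum
    push_cast
    linarith
end

section
/- Let G be a bipartite graph, let H be an unweighted edge-degree-constrained subgraph EDCS(G, β, β−1), and let G' be obtained from G by deleting a single edge e of G. Then there exists an unweighted EDCS(G', β, β−1) H' (with H' ⊆ E(G')) such that the symmetric difference of H∖{e} and H' contains at most 4β edges. -/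
/-- `H` is an EDCS of `G` with parameters `β, β - 1`, where every vertex `v` is credited with
`c v` extra units of degree. -/
def IsOffsetEDCS {V : Type*} (G : SimpleGraph V) (β : ℕ) (c : V → ℕ) (H : SimpleGraph V) : Prop :=
  H ≤ G ∧ (∀ u v, H.Adj u v → sdeg H u + c u + (sdeg H v + c v) ≤ β) ∧
    ∀ u v, G.Adj u v → ¬ H.Adj u v → β - 1 ≤ sdeg H u + c u + (sdeg H v + c v)

open Classical in
/-- The number of endpoints of the pair `x, y` that are equal to `w`. -/
noncomputable def endpointCount {V : Type*} (x y w : V) : ℕ :=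
  (if w = x then 1 else 0) + (if w = y then 1 else 0)

section Degree

variable {V : Type*} [Fintype V]

theorem sdeg_sup_edge {H : SimpleGraph V} {x y : V} (hxy : x ≠ y) (h : ¬ H.Adj x y) (w : V) :
    sdeg (H ⊔ SimpleGraph.edge x y) w = sdeg H w + endpointCount x y w := by
  classical
  unfold sdeg endpointCount
  by_cases hx : w = x
  · subst hx
    have hset : (H ⊔ SimpleGraph.edge w y).neighborSet w = insert y (H.neighborSet w) := by
      ext z
      simp only [SimpleGraph.mem_neighborSet, SimpleGraph.sup_adj, SimpleGraph.edge_adj,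
        Set.mem_insert_iff]
      grind
    rw [hset, Set.ncard_insert_of_notMem (by simpa using h) (Set.toFinite _)]
    simp [hxy]
  · by_cases hy : w = y
    · subst hy
      have hset : (H ⊔ SimpleGraph.edge x w).neighborSet w = insert x (H.neighborSet w) := by
        ext z
        simp only [SimpleGraph.mem_neighborSet, SimpleGraph.sup_adj, SimpleGraph.edge_adj,
          Set.mem_insert_iff]
        grind
      rw [hset, Set.ncard_insert_of_notMem
        (by simpa using fun h' : H.Adj w x => h h'.symm) (Set.toFinite _)]
      simp [hx]
    · have hset : (H ⊔ SimpleGraph.edge x y).neighborSet w = H.neighborSet w := by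
        ext z
        simp only [SimpleGraph.mem_neighborSet, SimpleGraph.sup_adj, SimpleGraph.edge_adj]
        grind
      simp [hset, hx, hy]

theorem sdeg_deleteEdges_add {H : SimpleGraph V} {x y : V} (h : H.Adj x y) (w : V) :
    sdeg (H.deleteEdges {s(x, y)}) w + endpointCount x y w = sdeg H w := by
  rw [← sdeg_sup_edge h.ne (by simp)]
  congr 1
  ext u v
  have := h.symm
  have := h.ne
  simp only [SimpleGraph.sup_adj, SimpleGraph.edge_adj, SimpleGraph.deleteEdges_adj,
    Set.mem_singleton_iff, Sym2.eq_iff]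
  grind

end Degree

section SymmDiff

variable {V : Type*} [Fintype V]

theorem ncard_symmDiff_le_add {α : Type*} [Finite α] (s t u : Set α) :
    (symmDiff s u).ncard ≤ (symmDiff s t).ncard + (symmDiff t u).ncard :=
  (Set.ncard_le_ncard (symmDiff_triangle s t u) (Set.toFinite _)).trans (Set.ncard_union_le _ _)

theorem ncard_symmDiff_edgeSet_sup_edge_le (H : SimpleGraph V) (x y : V) :
    (symmDiff H.edgeSet (H ⊔ SimpleGraph.edge x y).edgeSet).ncard ≤ 1 := by
  rw [← Set.ncard_singleton s(x, y)]
  refine Set.ncard_le_ncard ?_ (Set.toFinite _)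
  intro e
  induction e with
  | _ u v =>
    simp only [Set.mem_symmDiff, SimpleGraph.mem_edgeSet, SimpleGraph.sup_adj,
      SimpleGraph.edge_adj, Set.mem_singleton_iff, Sym2.eq_iff]
    grind

theorem ncard_symmDiff_edgeSet_deleteEdges_le (H : SimpleGraph V) (x y : V) :
    (symmDiff H.edgeSet (H.deleteEdges {s(x, y)}).edgeSet).ncard ≤ 1 := by
  rw [← Set.ncard_singleton s(x, y)]
  refine Set.ncard_le_ncard ?_ (Set.toFinite _)
  intro e
  simp only [Set.mem_symmDiff, SimpleGraph.edgeSet_deleteEdges, Set.mem_sdiff]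
  tauto

end SymmDiff

section Repair

variable {V : Type*} [Fintype V] {G H : SimpleGraph V} {β : ℕ} {c : V → ℕ}

open Classical in
/-- If dropping one unit of credit at `x` breaks the EDCS property, then some missing edge at `x`
is exactly tight. -/
theorem IsOffsetEDCS.exists_tight_nonedge {x : V}
    (hH : IsOffsetEDCS G β (fun w => c w + if w = x then 1 else 0) H)
    (hc : ¬ IsOffsetEDCS G β c H) :
    ∃ v, G.Adj x v ∧ ¬ H.Adj x v ∧ sdeg H x + c x + 1 + (sdeg H v + c v) + 1 = β := by
  obtain ⟨hle, h1, h2⟩ := hH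
  have h1' : ∀ u v, H.Adj u v → sdeg H u + c u + (sdeg H v + c v) ≤ β :=
    fun u v huv => by have := h1 u v huv; grind
  have : ∃ u v, G.Adj u v ∧ ¬ H.Adj u v ∧ sdeg H u + c u + (sdeg H v + c v) < β - 1 := by
    by_contra! hcon
    exact hc ⟨hle, h1', hcon⟩
  obtain ⟨u, v, hG, hn, hlt⟩ := this
  have hge := h2 u v hG hn
  have hne := hG.ne
  by_cases hu : u = x
  · subst hu
    refine ⟨v, hG, hn, ?_⟩
    simp only [if_true, if_neg hne.symm] at hge
    omega
  · by_cases hv : v = x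
    · subst hv
      refine ⟨u, hG.symm, fun h => hn h.symm, ?_⟩
      simp only [if_true, if_neg hu] at hge
      omega
    · simp only [if_neg hu, if_neg hv] at hge
      omega

open Classical in
/-- If adding a tight missing edge `x v` breaks the EDCS property, then some edge of `H` at `v` is
exactly tight. -/
theorem IsOffsetEDCS.exists_tight_edge {x v : V}
    (hH : IsOffsetEDCS G β (fun w => c w + if w = x then 1 else 0) H)
    (hG : G.Adj x v) (hn : ¬ H.Adj x v)
    (ht : sdeg H x + c x + 1 + (sdeg H v + c v) + 1 = β)
    (hc : ¬ IsOffsetEDCS G β c (H ⊔ SimpleGraph.edge x v)) :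
    ∃ w, H.Adj v w ∧ w ≠ x ∧ sdeg H v + c v + (sdeg H w + c w) = β := by
  obtain ⟨hle, h1, h2⟩ := hH
  have hdeg := sdeg_sup_edge hG.ne hn
  have hle' : H ⊔ SimpleGraph.edge x v ≤ G :=
    sup_le hle (by rw [SimpleGraph.edge_le_iff]; exact Or.inr hG)
  have h2' : ∀ u w, G.Adj u w → ¬ (H ⊔ SimpleGraph.edge x v).Adj u w →
      β - 1 ≤ sdeg (H ⊔ SimpleGraph.edge x v) u + c u +
        (sdeg (H ⊔ SimpleGraph.edge x v) w + c w) := by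
    intro u w hu hw
    have := h2 u w hu (fun h => hw (Or.inl h))
    simp only [hdeg, endpointCount] at this ⊢
    omega
  have : ∃ u w, (H ⊔ SimpleGraph.edge x v).Adj u w ∧
      β < sdeg (H ⊔ SimpleGraph.edge x v) u + c u +
        (sdeg (H ⊔ SimpleGraph.edge x v) w + c w) := by
    by_contra! hcon
    exact hc ⟨hle', hcon, h2'⟩
  obtain ⟨u, w, hadj, hlt⟩ := this
  have hxv := hG.ne
  have huw := hadj.ne
  rw [hdeg, hdeg] at hlt
  unfold endpointCount at hlt
  rw [SimpleGraph.sup_adj, SimpleGraph.edge_adj] at hadj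
  rcases hadj with hadj | ⟨hadj, -⟩
  · have := h1 u w hadj
    have := hadj.symm
    by_cases hu : u = v
    · refine ⟨w, hu ▸ hadj, ?_, ?_⟩ <;> grind
    · refine ⟨u, ?_, ?_, ?_⟩ <;> grind
  · grind

open Classical in
/-- Adding a tight missing edge `x v` and removing a tight edge `v w` moves the unit of credit from
`x` to `w`. -/
theorem IsOffsetEDCS.exchange {x v w : V}
    (hH : IsOffsetEDCS G β (fun w => c w + if w = x then 1 else 0) H)
    (hG : G.Adj x v) (hn : ¬ H.Adj x v)
    (ht : sdeg H x + c x + 1 + (sdeg H v + c v) + 1 = β)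
    (hvw : H.Adj v w) (hwx : w ≠ x) (ht' : sdeg H v + c v + (sdeg H w + c w) = β) :
    IsOffsetEDCS G β (fun z => c z + if z = w then 1 else 0)
        ((H ⊔ SimpleGraph.edge x v).deleteEdges {s(v, w)}) ∧
      sdeg ((H ⊔ SimpleGraph.edge x v).deleteEdges {s(v, w)}) w + 1 = sdeg H w := by
  obtain ⟨hle, h1, h2⟩ := hH
  have hxv := hG.ne
  have hne := hvw.ne
  have hle' : H ⊔ SimpleGraph.edge x v ≤ G :=
    sup_le hle (by rw [SimpleGraph.edge_le_iff]; exact Or.inr hG)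
  have hdeg : ∀ z, sdeg ((H ⊔ SimpleGraph.edge x v).deleteEdges {s(v, w)}) z +
      (if z = w then 1 else 0) = sdeg H z + if z = x then 1 else 0 := by
    intro z
    have e1 := sdeg_sup_edge hxv hn z
    have e2 := sdeg_deleteEdges_add (H := H ⊔ SimpleGraph.edge x v) (Or.inl hvw) z
    unfold endpointCount at e1 e2
    omega
  have hcredit : ∀ z, sdeg ((H ⊔ SimpleGraph.edge x v).deleteEdges {s(v, w)}) z +
      (c z + if z = w then 1 else 0) = sdeg H z + (c z + if z = x then 1 else 0) := by
    intro z
    have := hdeg z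
    omega
  refine ⟨⟨(SimpleGraph.deleteEdges_le _).trans hle', ?_, ?_⟩, ?_⟩
  · intro p q hpq
    rw [hcredit, hcredit]
    rw [SimpleGraph.deleteEdges_adj, SimpleGraph.sup_adj, SimpleGraph.edge_adj] at hpq
    rcases hpq.1 with h | ⟨h, -⟩
    · exact h1 p q h
    · grind
  · intro p q hpG hpq
    rw [hcredit, hcredit]
    by_cases hp : H.Adj p q
    · have hs : s(p, q) = s(v, w) := by
        by_contra hs
        exact hpq (SimpleGraph.deleteEdges_adj.2 ⟨Or.inl hp, hs⟩)
      rw [Sym2.eq_iff] at hs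
      grind
    · exact h2 p q hpG hp
  · have := hdeg w
    simpa [hwx] using this

open Classical in
/-- One unit of credit at `x` can be discharged by changing at most `2 * n` edges, where `n` bounds
the gap between `β` and the credited degree of `x`. -/
theorem IsOffsetEDCS.exists_discharge (n : ℕ) {x : V}
    (hH : IsOffsetEDCS G β (fun w => c w + if w = x then 1 else 0) H)
    (hn : β ≤ sdeg H x + c x + 1 + n) :
    ∃ H', IsOffsetEDCS G β c H' ∧ (symmDiff H.edgeSet H'.edgeSet).ncard ≤ 2 * n := by
  induction n generalizing H x with
  | zero =>
    refine ⟨H, ?_, by simp⟩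
    by_contra hc
    obtain ⟨v, -, -, ht⟩ := hH.exists_tight_nonedge hc
    omega
  | succ n ih =>
    by_cases hc : IsOffsetEDCS G β c H
    · exact ⟨H, hc, by simp⟩
    obtain ⟨v, hG, hxv, ht⟩ := hH.exists_tight_nonedge hc
    have hadd := ncard_symmDiff_edgeSet_sup_edge_le H x v
    by_cases hc' : IsOffsetEDCS G β c (H ⊔ SimpleGraph.edge x v)
    · exact ⟨_, hc', by omega⟩
    obtain ⟨w, hvw, hwx, ht'⟩ := hH.exists_tight_edge hG hxv ht hc'
    obtain ⟨hK, hdeg⟩ := hH.exchange hG hxv ht hvw hwx ht'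
    obtain ⟨H', hH', hcard⟩ := ih hK (by omega)
    refine ⟨H', hH', ?_⟩
    have hdel := ncard_symmDiff_edgeSet_deleteEdges_le (H ⊔ SimpleGraph.edge x v) v w
    have t1 := ncard_symmDiff_le_add H.edgeSet (H ⊔ SimpleGraph.edge x v).edgeSet H'.edgeSet
    have t2 := ncard_symmDiff_le_add (H ⊔ SimpleGraph.edge x v).edgeSet
      ((H ⊔ SimpleGraph.edge x v).deleteEdges {s(v, w)}).edgeSet H'.edgeSet
    omega

end Repair

/-- Let `H` be an unweighted EDCS(G, β, β−1) of a bipartite graph `G`,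
and let `G'` be obtained from `G` by deleting the edge `{a, b}` of `G`.  Then there is an
unweighted EDCS(G', β, β−1) `H'` whose symmetric difference with `H ∖ {a, b}` has at most
`4β` edges. -/
theorem stmt14 {V : Type*} [Fintype V] (G H : SimpleGraph V)
    (hbip : G.Colorable 2) (hHG : H ≤ G) (β : ℕ)
    (hP1 : ∀ u v : V, H.Adj u v → sdeg H u + sdeg H v ≤ β)
    (hP2 : ∀ u v : V, G.Adj u v → ¬ H.Adj u v → β - 1 ≤ sdeg H u + sdeg H v)
    (a b : V) (hadj : G.Adj a b) :
    ∃ H' : SimpleGraph V, H' ≤ G.deleteEdges {s(a, b)} ∧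
      (∀ u v : V, H'.Adj u v → sdeg H' u + sdeg H' v ≤ β) ∧
      (∀ u v : V, (G.deleteEdges {s(a, b)}).Adj u v → ¬ H'.Adj u v →
        β - 1 ≤ sdeg H' u + sdeg H' v) ∧
      (symmDiff (H.deleteEdges {s(a, b)}).edgeSet H'.edgeSet).ncard ≤ 4 * β := by
  classical
  by_cases hab : H.Adj a b
  · have hdeg := sdeg_deleteEdges_add hab
    have hstart : IsOffsetEDCS (G.deleteEdges {s(a, b)}) β
        (fun w => (if w = b then 1 else 0) + if w = a then 1 else 0)
        (H.deleteEdges {s(a, b)}) := by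
      have hcredit : ∀ w, sdeg (H.deleteEdges {s(a, b)}) w +
          ((if w = b then 1 else 0) + if w = a then 1 else 0) = sdeg H w := by
        intro w
        rw [← hdeg w, endpointCount, add_comm (ite (w = b) 1 0)]
      refine ⟨SimpleGraph.deleteEdges_mono hHG, fun u v huv => ?_, fun u v huv hn => ?_⟩
      · rw [hcredit, hcredit]
        exact hP1 u v (SimpleGraph.deleteEdges_adj.1 huv).1
      · rw [hcredit, hcredit]
        rw [SimpleGraph.deleteEdges_adj] at huv hn
        exact hP2 u v huv.1 fun h => hn ⟨h, huv.2⟩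
    obtain ⟨K, hK, hKcard⟩ := hstart.exists_discharge β (by omega)
    have hK' : IsOffsetEDCS (G.deleteEdges {s(a, b)}) β
        (fun w => 0 + if w = b then 1 else 0) K := by simpa using hK
    obtain ⟨H', ⟨hle, h1, h2⟩, hcard⟩ :=
      IsOffsetEDCS.exists_discharge (c := fun _ => 0) β hK' (by omega)
    refine ⟨H', hle, h1, h2, ?_⟩
    have := ncard_symmDiff_le_add (H.deleteEdges {s(a, b)}).edgeSet K.edgeSet H'.edgeSet
    omega
  · have hdel : H.deleteEdges {s(a, b)} = H :=
      SimpleGraph.deleteEdges_eq_self.2 (by simpa using hab)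
    refine ⟨H, ?_, hP1, fun u v huv hn => hP2 u v (SimpleGraph.deleteEdges_adj.1 huv).1 hn, ?_⟩
    · rw [← hdel]
      exact SimpleGraph.deleteEdges_mono hHG
    · simp [hdel]
end
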